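/- Operator bounds Lemma: Let (Λ,f) be a strongly mixing C¹ conformal repeller with scale constants δ_f, λ₀, λ₁ as in (C2') and (C3'). For each s≥0 the lower and upper pressures agree and are finite: P̲(s)=P̄(s)=:P(s)∈ℝ. Moreover s↦s·log β+P(s) is non-increasing, s↦s·log‖Df‖+P(s) is non-decreasing, 0≤P(0)<∞, the function s↦P(s) is continuous and strictly decreasing on [0,∞), and P has a unique zero s_crit≥0. -/

import Mathlib

open Filter Topology Metric Set
open scoped Classical

noncomputable section

/-- `Df` is the conformal derivative of `f`. -/
def IsConfDeriv {Λ : Type*} [MetricSpace Λ] (f : Λ → Λ) (Df : Λ → ℝ) : Prop :=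
  ∀ x : Λ, Filter.Tendsto (fun p : Λ × Λ => dist (f p.1) (f p.2) / dist p.1 p.2)
    ((𝓝 x ×ˢ 𝓝 x) ⊓ 𝓟 {p : Λ × Λ | p.1 ≠ p.2}) (𝓝 (Df x))

/-- `Df^{(n)}_x`, the conformal derivative along the orbit. -/
def orbDeriv {Λ : Type*} [MetricSpace Λ] (f : Λ → Λ) (Df : Λ → ℝ) (n : ℕ) (x : Λ) : ℝ :=
  ∏ k ∈ Finset.range n, Df (f^[k] x)

/-- (C2): uniform expansion. -/
def UnifExpanding {Λ : Type*} [MetricSpace Λ] (f : Λ → Λ) (Df : Λ → ℝ) : Prop :=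
  ∃ C : ℝ, 0 < C ∧ ∃ β : ℝ, 1 < β ∧ ∀ (x : Λ) (n : ℕ), C * β ^ n ≤ orbDeriv f Df n x

/-- `M_n(s) = sup_y (L_sⁿ 1)(y) = sup_y Σ_{f^n x = y} (Df^{(n)}_x)^{-s}`. -/
def Mn {Λ : Type*} [MetricSpace Λ] (f : Λ → Λ) (Df : Λ → ℝ) (s : ℝ) (n : ℕ) : ℝ :=
  ⨆ y : Λ, ∑' x : ↥(f^[n] ⁻¹' {y}), orbDeriv f Df n (x : Λ) ^ (-s)

/-- `m_n(s) = inf_y (L_sⁿ 1)(y)`. -/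
def mn {Λ : Type*} [MetricSpace Λ] (f : Λ → Λ) (Df : Λ → ℝ) (s : ℝ) (n : ℕ) : ℝ :=
  ⨅ y : Λ, ∑' x : ↥(f^[n] ⁻¹' {y}), orbDeriv f Df n (x : Λ) ^ (-s)

/-!
Write `L_sⁿ 1 (y)` as the sum over `fⁿ x = y` of `exp (S_n φ x)`, where `φ = -s log Df` and `S_n`
is the Birkhoff sum. Local inverse branches of `f` do not increase distances, so the preimages of
two nearby points are paired by an injection that stays close along whole orbits, and uniform
continuity of `φ` gives `L_sⁿ 1 (z) ≤ e^{nε} L_sⁿ 1 (z')`. By mixing, every `y` is the image under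
a fixed iterate `f^k` of a point `z'` near any given `z`, whence
`M_n(s) ≤ e^{nε + C} m_{n+k}(s)`. As `log M_n(s)` is subadditive, Fekete's lemma gives its growth
rate, and letting `ε → 0` gives the same rate for `m_n(s)`. Finally `φ ≤ ψ + c` implies
`P(φ) ≤ P(ψ) + c`; applied to multiples of `log Df`, with `log β ≤ log Df ≤ log ‖Df‖`, this yields
the two monotonicity statements, from which the remaining claims follow.
-/

section RealSequences

theorem tendsto_inv_mul_of_squeeze_shift {u v : ℕ → ℝ} {L : ℝ}
    (hv : Tendsto (fun n : ℕ => (n : ℝ)⁻¹ * v n) atTop (𝓝 L)) (huv : ∀ n, u n ≤ v n)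
    (hvu : ∀ ε > 0, ∃ (k : ℕ) (C : ℝ), ∀ n : ℕ, v n ≤ n * ε + C + u (n + k)) :
    Tendsto (fun n : ℕ => (n : ℝ)⁻¹ * u n) atTop (𝓝 L) := by
  refine tendsto_order.2 ⟨fun c hc => ?_, fun c hc => ?_⟩
  · obtain ⟨k, C, hk⟩ := hvu ((L - c) / 2) (by linarith)
    have hlower : Tendsto (fun n : ℕ => (n / (n + k) : ℝ) *
        ((n : ℝ)⁻¹ * v n - (L - c) / 2 - C / n)) atTop (𝓝 (1 * (L - (L - c) / 2 - 0))) :=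
      (tendsto_natCast_div_add_atTop (k : ℝ)).mul
        ((hv.sub_const _).sub (tendsto_const_div_atTop_nhds_zero_nat C))
    rw [← map_add_atTop_eq_nat k, eventually_map]
    filter_upwards [hlower.eventually_const_lt (u := c) (by linarith), eventually_gt_atTop 0]
      with n hcn hn
    have : (0 : ℝ) < n := Nat.cast_pos.2 hn
    calc c < (n / (n + k) : ℝ) * ((n : ℝ)⁻¹ * v n - (L - c) / 2 - C / n) := hcn
      _ = ((n + k : ℕ) : ℝ)⁻¹ * (v n - n * ((L - c) / 2) - C) := by
          push_cast
          field_simp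
      _ ≤ ((n + k : ℕ) : ℝ)⁻¹ * u (n + k) := by
          gcongr
          linarith [hk n]
  · filter_upwards [hv.eventually_lt_const hc] with n hn
    exact lt_of_le_of_lt (by gcongr; exact huv n) hn

theorem exists_tendsto_inv_mul_of_subadditive {u : ℕ → ℝ} (hu : Subadditive u) {c : ℝ}
    (hc : ∀ n : ℕ, n * c ≤ u n) :
    ∃ L, Tendsto (fun n : ℕ => (n : ℝ)⁻¹ * u n) atTop (𝓝 L) := by
  have hbdd : BddBelow (range fun n : ℕ => u n / n) := by
    refine ⟨min c 0, ?_⟩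
    rintro _ ⟨n, rfl⟩
    rcases n.eq_zero_or_pos with rfl | hn
    · simp
    · exact (min_le_left _ _).trans ((le_div_iff₀' (Nat.cast_pos.2 hn)).2 (hc n))
  exact ⟨hu.lim, (hu.tendsto_lim hbdd).congr fun n => div_eq_inv_mul _ _⟩

end RealSequences

section RealFunctions

variable {P : ℝ → ℝ} {a b : ℝ}

theorem strictAnti_of_antitone_mul_add (ha : 0 < a) (hP : Antitone fun s => s * a + P s) :
    StrictAnti P := fun s t hst => by
  have h := hP hst.le
  have : s * a < t * a := by gcongr
  dsimp only at h
  linarith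

theorem continuous_of_antitone_of_monotone_mul_add (hanti : Antitone fun s => s * a + P s)
    (hmono : Monotone fun s => s * b + P s) : Continuous P := by
  refine (LipschitzWith.of_le_add_mul (‖a‖₊ + ‖b‖₊) fun s t => ?_).continuous
  simp only [Real.dist_eq, NNReal.coe_add, coe_nnnorm, Real.norm_eq_abs, add_mul, ← abs_mul]
  rcases le_total s t with hst | hts
  · have h : s * b + P s ≤ t * b + P t := hmono hst
    linarith [neg_abs_le (b * (s - t)), abs_nonneg (a * (s - t))]
  · have h : s * a + P s ≤ t * a + P t := hanti hts
    linarith [neg_abs_le (a * (s - t)), abs_nonneg (b * (s - t))]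

theorem existsUnique_nonneg_zero_of_antitone_mul_add (ha : 0 < a)
    (hP : Antitone fun s => s * a + P s) (hcont : Continuous P) (h0 : 0 ≤ P 0) :
    ∃! s, 0 ≤ s ∧ P s = 0 := by
  have hT : 0 ≤ P 0 / a := by positivity
  have hPT : P (P 0 / a) ≤ 0 := by
    have h := hP hT
    simp only [div_mul_cancel₀ _ ha.ne', zero_mul, zero_add] at h
    linarith
  obtain ⟨s, hs, hs0⟩ := intermediate_value_Icc' hT hcont.continuousOn ⟨hPT, h0⟩
  exact ⟨s, ⟨hs.1, hs0⟩, fun t ht =>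
    (strictAnti_of_antitone_mul_add ha hP).injective (ht.2.trans hs0.symm)⟩

end RealFunctions

section PreimageSum

variable {X : Type*} {f : X → X} {φ ψ : X → ℝ}

/-- The iterated transfer operator with potential `φ` applied to the constant function `1`,
that is `(L_φⁿ 1)(y) = Σ_{fⁿ x = y} exp (φ x + φ (f x) + ⋯ + φ (fⁿ⁻¹ x))`. -/
def preimageSum (f : X → X) (φ : X → ℝ) (n : ℕ) (y : X) : ℝ :=
  ∑' x : f^[n] ⁻¹' {y}, Real.exp (birkhoffSum f φ n x)

theorem preimageSum_nonneg (f : X → X) (φ : X → ℝ) (n : ℕ) (y : X) : 0 ≤ preimageSum f φ n y :=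
  tsum_nonneg fun _ => (Real.exp_pos _).le

theorem bddBelow_range_preimageSum (f : X → X) (φ : X → ℝ) (n : ℕ) :
    BddBelow (range (preimageSum f φ n)) :=
  ⟨0, forall_mem_range.2 (preimageSum_nonneg f φ n)⟩

@[simp]
theorem preimageSum_zero (f : X → X) (φ : X → ℝ) (y : X) : preimageSum f φ 0 y = 1 := by
  have : Unique (f^[0] ⁻¹' {y}) := inferInstanceAs (Unique ({y} : Set X))
  simp [preimageSum]

theorem finite_preimage_iterate (hfib : ∀ y, (f ⁻¹' {y}).Finite) (n : ℕ) (y : X) :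
    Finite (f^[n] ⁻¹' {y}) := by
  induction n generalizing y with
  | zero => exact Set.finite_singleton y
  | succ n ih =>
    rw [Function.iterate_succ', preimage_comp]
    exact (hfib y).preimage' fun z _ => ih z

theorem preimageSum_add (hfib : ∀ y, (f ⁻¹' {y}).Finite) (φ : X → ℝ) (m n : ℕ) (y : X) :
    preimageSum f φ (m + n) y =
      ∑' z : f^[m] ⁻¹' {y}, Real.exp (birkhoffSum f φ m z) * preimageSum f φ n z := by
  have := finite_preimage_iterate hfib
  let e : (Σ z : f^[m] ⁻¹' {y}, f^[n] ⁻¹' {(z : X)}) ≃ f^[m + n] ⁻¹' {y} :=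
    Equiv.sigmaSubtypeFiberEquivSubtype f^[n] fun x => by
      rw [mem_preimage, mem_preimage, Function.iterate_add_apply]
  have hexp (p : Σ z : f^[m] ⁻¹' {y}, f^[n] ⁻¹' {(z : X)}) :
      Real.exp (birkhoffSum f φ (m + n) (e p)) =
        Real.exp (birkhoffSum f φ m p.1) * Real.exp (birkhoffSum f φ n p.2) := by
    have he : (e p : X) = p.2 := rfl
    have hp : f^[n] p.2 = p.1 := p.2.2
    rw [he, add_comm m n, birkhoffSum_add, hp, add_comm, Real.exp_add]
  calc preimageSum f φ (m + n) y = ∑' p, Real.exp (birkhoffSum f φ (m + n) (e p)) :=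
        (e.tsum_eq _).symm
    _ = ∑' z : f^[m] ⁻¹' {y}, ∑' x : f^[n] ⁻¹' {(z : X)},
          Real.exp (birkhoffSum f φ m z) * Real.exp (birkhoffSum f φ n x) := by
        simp only [hexp]
        exact Summable.tsum_sigma .of_finite
    _ = _ := by simp only [tsum_mul_left, preimageSum]

theorem exp_birkhoffSum_mul_preimageSum_le (hfib : ∀ y, (f ⁻¹' {y}).Finite) (φ : X → ℝ)
    (m n : ℕ) (z : X) :
    Real.exp (birkhoffSum f φ m z) * preimageSum f φ n z ≤ preimageSum f φ (m + n) (f^[m] z) := by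
  have := finite_preimage_iterate hfib m (f^[m] z)
  rw [preimageSum_add hfib]
  exact Summable.le_tsum (f := fun x : f^[m] ⁻¹' {f^[m] z} =>
    Real.exp (birkhoffSum f φ m x) * preimageSum f φ n x) .of_finite ⟨z, rfl⟩
    fun x _ => mul_nonneg (Real.exp_pos _).le (preimageSum_nonneg f φ n x)

theorem birkhoffSum_le_birkhoffSum_add {c : ℝ} (h : ∀ x, φ x ≤ ψ x + c) (n : ℕ) (x : X) :
    birkhoffSum f φ n x ≤ birkhoffSum f ψ n x + n * c :=
  calc birkhoffSum f φ n x ≤ ∑ k ∈ Finset.range n, (ψ (f^[k] x) + c) :=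
        Finset.sum_le_sum fun k _ => h _
    _ = birkhoffSum f ψ n x + n * c := by simp [Finset.sum_add_distrib, birkhoffSum]

theorem natCast_mul_le_birkhoffSum {c : ℝ} (h : ∀ x, c ≤ φ x) (n : ℕ) (x : X) :
    n * c ≤ birkhoffSum f φ n x := by
  simpa [birkhoffSum] using Finset.card_nsmul_le_sum (Finset.range n) _ c fun k _ => h (f^[k] x)

theorem preimageSum_le_exp_mul_of_le_add (hfib : ∀ y, (f ⁻¹' {y}).Finite) {c : ℝ}
    (h : ∀ x, φ x ≤ ψ x + c) (n : ℕ) (y : X) :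
    preimageSum f φ n y ≤ Real.exp (n * c) * preimageSum f ψ n y := by
  have := finite_preimage_iterate hfib n y
  rw [preimageSum, preimageSum, ← tsum_mul_left]
  refine Summable.tsum_le_tsum (fun x => ?_) .of_finite .of_finite
  rw [← Real.exp_add, Real.exp_le_exp, add_comm]
  exact birkhoffSum_le_birkhoffSum_add h n x

theorem exp_natCast_mul_le_preimageSum (hfib : ∀ y, (f ⁻¹' {y}).Finite)
    (hsurj : Function.Surjective f) {c : ℝ} (h : ∀ x, c ≤ φ x) (n : ℕ) (y : X) :
    Real.exp (n * c) ≤ preimageSum f φ n y := by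
  obtain ⟨z, rfl⟩ := hsurj.iterate n y
  calc Real.exp (n * c) ≤ Real.exp (birkhoffSum f φ n z) :=
        Real.exp_le_exp.2 (natCast_mul_le_birkhoffSum h n z)
    _ ≤ preimageSum f φ n (f^[n] z) := by
        simpa using exp_birkhoffSum_mul_preimageSum_le hfib φ n 0 z

theorem iSup_preimageSum_add_le [Nonempty X] (hfib : ∀ y, (f ⁻¹' {y}).Finite)
    (hbdd : ∀ n, BddAbove (range (preimageSum f φ n))) (m n : ℕ) :
    ⨆ y, preimageSum f φ (m + n) y ≤ (⨆ y, preimageSum f φ m y) * ⨆ y, preimageSum f φ n y := by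
  refine ciSup_le fun y => ?_
  have := finite_preimage_iterate hfib m y
  calc preimageSum f φ (m + n) y
      = ∑' z : f^[m] ⁻¹' {y}, Real.exp (birkhoffSum f φ m z) * preimageSum f φ n z :=
        preimageSum_add hfib φ m n y
    _ ≤ ∑' z : f^[m] ⁻¹' {y}, Real.exp (birkhoffSum f φ m z) * ⨆ y, preimageSum f φ n y :=
        Summable.tsum_le_tsum (fun z => by gcongr; exact le_ciSup (hbdd n) z)
          .of_finite .of_finite
    _ = preimageSum f φ m y * ⨆ y, preimageSum f φ n y := by rw [tsum_mul_right, preimageSum]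
    _ ≤ _ := by
        gcongr
        · exact Real.iSup_nonneg (preimageSum_nonneg f φ n)
        · exact le_ciSup (hbdd m) y

end PreimageSum

section MixingRepeller

variable {X : Type*} [MetricSpace X] {f : X → X} {φ ψ : X → ℝ} {r : ℝ}

/-- The metric properties (C2') and (C3') of a repeller at scale `r`. Instead of uniform expansion,
only that distances below `r` do not shrink is asked for. -/
structure IsRepellerAtScale (f : X → X) (r : ℝ) : Prop where
  scale_pos : 0 < r
  dist_le_dist_map : ∀ u v, dist u v < r → dist u v ≤ dist (f u) (f v)
  ball_subset_image : ∀ x, ball (f x) r ⊆ f '' ball x r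

namespace IsRepellerAtScale

theorem eq_of_map_eq (hf : IsRepellerAtScale f r) {u v : X} (huv : dist u v < r)
    (h : f u = f v) : u = v :=
  dist_le_zero.1 <| (hf.dist_le_dist_map u v huv).trans_eq (by rw [h, dist_self])

theorem finite_preimage [CompactSpace X] (hf : IsRepellerAtScale f r) (y : X) :
    (f ⁻¹' {y}).Finite := by
  obtain ⟨t, ht, hcover⟩ := totallyBounded_iff.1 (isCompact_univ (X := X)).totallyBounded
    (r / 2) (half_pos hf.scale_pos)
  have hsub (z : X) : (ball z (r / 2) ∩ f ⁻¹' {y}).Subsingleton := fun u hu v hv =>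
    hf.eq_of_map_eq (by linarith [dist_triangle_right u v z, mem_ball.1 hu.1, mem_ball.1 hv.1])
      (hu.2.trans hv.2.symm)
  refine (ht.biUnion fun z _ => (hsub z).finite).subset fun x hx => ?_
  obtain ⟨z, hz, hxz⟩ := mem_iUnion₂.1 (hcover (mem_univ x))
  exact mem_biUnion hz ⟨hxz, hx⟩

theorem exists_injective_preimage_dist_lt (hf : IsRepellerAtScale f r) {δ : ℝ} (hδ : δ ≤ r / 2)
    {y y' : X} (hy : dist y y' < δ) :
    ∃ g : f ⁻¹' {y} → f ⁻¹' {y'},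
      Function.Injective g ∧ ∀ x : f ⁻¹' {y}, dist (x : X) (g x) < δ := by
  have hr := hf.scale_pos
  have hlift (x : f ⁻¹' {y}) : ∃ x' : f ⁻¹' {y'}, dist (x : X) x' < δ := by
    have hxy : f x = y := x.2
    obtain ⟨x', hxx', hx'⟩ : y' ∈ f '' ball x r :=
      hf.ball_subset_image x (by rw [mem_ball', hxy]; linarith)
    refine ⟨⟨x', hx'⟩, (hf.dist_le_dist_map x x' (mem_ball'.1 hxx')).trans_lt ?_⟩
    rwa [hxy, hx']
  choose g hg using hlift
  refine ⟨g, fun u v huv => Subtype.ext (hf.eq_of_map_eq ?_ (u.2.trans v.2.symm)), hg⟩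
  have hu := hg u
  rw [huv] at hu
  linarith [dist_triangle_right (u : X) v (g v), hg v]

theorem preimageSum_le_of_dist_lt [CompactSpace X] (hf : IsRepellerAtScale f r) {δ ε : ℝ}
    (hδ : δ ≤ r / 2) (hφ : ∀ x x', dist x x' < δ → φ x ≤ φ x' + ε) (n : ℕ) {y y' : X}
    (hy : dist y y' < δ) :
    preimageSum f φ n y ≤ Real.exp (n * ε) * preimageSum f φ n y' := by
  induction n generalizing y y' with
  | zero => simp
  | succ n ih =>
    obtain ⟨g, hginj, hg⟩ := hf.exists_injective_preimage_dist_lt hδ hy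
    have hfin := finite_preimage_iterate hf.finite_preimage 1
    rw [add_comm n 1, preimageSum_add hf.finite_preimage, preimageSum_add hf.finite_preimage,
      ← tsum_mul_left]
    refine Summable.tsum_le_tsum_of_inj g hginj (fun x _ => ?_) (fun x => ?_)
      .of_finite .of_finite
    · have := preimageSum_nonneg f φ n x
      positivity
    · simp only [birkhoffSum_one]
      calc Real.exp (φ x) * preimageSum f φ n x
          ≤ Real.exp (φ (g x) + ε) * (Real.exp (n * ε) * preimageSum f φ n (g x)) := by
            gcongr
            · exact preimageSum_nonneg f φ n x
            · exact hφ _ _ (hg x)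
            · exact ih (hg x)
        _ = Real.exp (((1 + n : ℕ) : ℝ) * ε) *
              (Real.exp (φ (g x)) * preimageSum f φ n (g x)) := by
            rw [← mul_assoc, ← mul_assoc, ← Real.exp_add, ← Real.exp_add]
            push_cast
            ring_nf

end IsRepellerAtScale

/-- A repeller at scale `r` that satisfies the strong mixing condition (C4): a fixed iterate maps
all balls of a given radius onto the whole space. -/
structure IsMixingRepeller (f : X → X) (r : ℝ) : Prop extends IsRepellerAtScale f r where
  exists_iterate_image_ball : ∀ δ > 0, ∃ n₀ : ℕ, ∀ x, f^[n₀] '' ball x δ = univ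

namespace IsMixingRepeller

theorem surjective (hf : IsMixingRepeller f r) : Function.Surjective f := by
  rcases subsingleton_or_nontrivial X with hX | hX
  · exact fun y => ⟨y, Subsingleton.elim _ _⟩
  obtain ⟨a, b, hab⟩ := exists_pair_ne X
  obtain ⟨n₀, hn₀⟩ := hf.exists_iterate_image_ball (dist b a) (dist_pos.2 hab.symm)
  cases n₀ with
  | zero =>
    have hb : b ∈ f^[0] '' ball a (dist b a) := hn₀ a ▸ mem_univ b
    simp at hb
  | succ n =>
    intro y
    obtain ⟨x, -, hx⟩ : y ∈ f^[n + 1] '' ball a (dist b a) := hn₀ a ▸ mem_univ y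
    exact ⟨f^[n] x, by rw [← hx, Function.iterate_succ_apply']⟩

variable [CompactSpace X]

theorem exists_preimageSum_le_exp_mul (hf : IsMixingRepeller f r) (hφ : Continuous φ) {ε : ℝ}
    (hε : 0 < ε) : ∃ (k : ℕ) (C : ℝ), ∀ n y z,
      preimageSum f φ n z ≤ Real.exp (n * ε + C) * preimageSum f φ (n + k) y := by
  obtain ⟨c, hc⟩ := (isCompact_range hφ).bddBelow
  obtain ⟨δ, hδ, hφδ⟩ :=
    uniformContinuous_iff.1 (CompactSpace.uniformContinuous_of_continuous hφ) ε hε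
  have hvar (x x' : X) (h : dist x x' < min δ (r / 2)) : φ x ≤ φ x' + ε := by
    linarith [le_abs_self (φ x - φ x'), Real.dist_eq (φ x) (φ x'),
      hφδ (h.trans_le (min_le_left _ _))]
  obtain ⟨k, hk⟩ := hf.exists_iterate_image_ball _ (lt_min hδ (half_pos hf.scale_pos))
  refine ⟨k, -(k * c), fun n y z => ?_⟩
  obtain ⟨z', hz', rfl⟩ : y ∈ f^[k] '' ball z (min δ (r / 2)) := hk z ▸ mem_univ y
  calc preimageSum f φ n z ≤ Real.exp (n * ε) * preimageSum f φ n z' :=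
        hf.preimageSum_le_of_dist_lt (min_le_right _ _) hvar n (mem_ball'.1 hz')
    _ = Real.exp (n * ε + -(k * c)) * (Real.exp (k * c) * preimageSum f φ n z') := by
        rw [← mul_assoc, ← Real.exp_add, neg_add_cancel_right]
    _ ≤ Real.exp (n * ε + -(k * c)) * (Real.exp (birkhoffSum f φ k z') * preimageSum f φ n z') := by
        gcongr
        · exact preimageSum_nonneg f φ n z'
        · exact natCast_mul_le_birkhoffSum (fun x => hc (mem_range_self x)) k z'
    _ ≤ Real.exp (n * ε + -(k * c)) * preimageSum f φ (n + k) (f^[k] z') := by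
        rw [add_comm n k]
        gcongr
        exact exp_birkhoffSum_mul_preimageSum_le hf.finite_preimage φ k n z'

theorem exists_exp_natCast_mul_le_preimageSum (hf : IsMixingRepeller f r) (hφ : Continuous φ) :
    ∃ c : ℝ, ∀ (n : ℕ) y, Real.exp (n * c) ≤ preimageSum f φ n y :=
  let ⟨c, hc⟩ := (isCompact_range hφ).bddBelow
  ⟨c, exp_natCast_mul_le_preimageSum hf.finite_preimage hf.surjective
    fun x => hc (mem_range_self x)⟩

variable [Nonempty X]

theorem bddAbove_range_preimageSum (hf : IsMixingRepeller f r) (hφ : Continuous φ) (n : ℕ) :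
    BddAbove (range (preimageSum f φ n)) := by
  obtain ⟨k, C, hkC⟩ := hf.exists_preimageSum_le_exp_mul hφ one_pos
  exact ⟨_, forall_mem_range.2 fun z => hkC n (Classical.arbitrary X) z⟩

theorem iInf_preimageSum_pos (hf : IsMixingRepeller f r) (hφ : Continuous φ) (n : ℕ) :
    0 < ⨅ y, preimageSum f φ n y :=
  let ⟨_, hc⟩ := hf.exists_exp_natCast_mul_le_preimageSum hφ
  (Real.exp_pos _).trans_le (le_ciInf (hc n))

theorem iInf_preimageSum_le_iSup (hf : IsMixingRepeller f r) (hφ : Continuous φ) (n : ℕ) :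
    ⨅ y, preimageSum f φ n y ≤ ⨆ y, preimageSum f φ n y :=
  ciInf_le_ciSup (bddBelow_range_preimageSum f φ n) (hf.bddAbove_range_preimageSum hφ n)

theorem iSup_preimageSum_pos (hf : IsMixingRepeller f r) (hφ : Continuous φ) (n : ℕ) :
    0 < ⨆ y, preimageSum f φ n y :=
  (hf.iInf_preimageSum_pos hφ n).trans_le (hf.iInf_preimageSum_le_iSup hφ n)

end IsMixingRepeller

/-- The upper pressure `lim_n (1/n) log sup_y (L_φⁿ 1)(y)` of the potential `φ`, with a junk value
if the limit does not exist. -/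
def pressure (f : X → X) (φ : X → ℝ) : ℝ :=
  limUnder atTop fun n : ℕ => (n : ℝ)⁻¹ * Real.log (⨆ y, preimageSum f φ n y)

namespace IsMixingRepeller

variable [CompactSpace X] [Nonempty X]

theorem tendsto_log_iSup_preimageSum (hf : IsMixingRepeller f r) (hφ : Continuous φ) :
    Tendsto (fun n : ℕ => (n : ℝ)⁻¹ * Real.log (⨆ y, preimageSum f φ n y)) atTop
      (𝓝 (pressure f φ)) := by
  have hpos := hf.iSup_preimageSum_pos hφ
  have hbdd := hf.bddAbove_range_preimageSum hφ
  have hsub : Subadditive fun n => Real.log (⨆ y, preimageSum f φ n y) := fun m n => by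
    rw [← Real.log_mul (hpos m).ne' (hpos n).ne']
    exact Real.log_le_log (hpos _) (iSup_preimageSum_add_le hf.finite_preimage hbdd m n)
  obtain ⟨c, hc⟩ := hf.exists_exp_natCast_mul_le_preimageSum hφ
  have hlower (n : ℕ) : n * c ≤ Real.log (⨆ y, preimageSum f φ n y) :=
    (Real.le_log_iff_exp_le (hpos n)).2 <|
      (hc n _).trans (le_ciSup (hbdd n) (Classical.arbitrary X))
  exact tendsto_nhds_limUnder (exists_tendsto_inv_mul_of_subadditive hsub hlower)

theorem log_iSup_preimageSum_le_of_forall_le (hf : IsMixingRepeller f r) (hφ : Continuous φ)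
    {k n : ℕ} {C : ℝ} (h : ∀ y z, preimageSum f φ n z ≤ Real.exp C * preimageSum f φ (n + k) y) :
    Real.log (⨆ y, preimageSum f φ n y) ≤ C + Real.log (⨅ y, preimageSum f φ (n + k) y) := by
  have hle : (⨆ y, preimageSum f φ n y) / Real.exp C ≤ ⨅ y, preimageSum f φ (n + k) y :=
    le_ciInf fun y => (div_le_iff₀' (Real.exp_pos C)).2 (ciSup_le (h y))
  have hlog := Real.log_le_log (div_pos (hf.iSup_preimageSum_pos hφ n) (Real.exp_pos C)) hle
  rw [Real.log_div (hf.iSup_preimageSum_pos hφ n).ne' (Real.exp_pos C).ne', Real.log_exp] at hlog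
  linarith

theorem tendsto_log_iInf_preimageSum (hf : IsMixingRepeller f r) (hφ : Continuous φ) :
    Tendsto (fun n : ℕ => (n : ℝ)⁻¹ * Real.log (⨅ y, preimageSum f φ n y)) atTop
      (𝓝 (pressure f φ)) := by
  refine tendsto_inv_mul_of_squeeze_shift (hf.tendsto_log_iSup_preimageSum hφ)
    (fun n => Real.log_le_log (hf.iInf_preimageSum_pos hφ n) (hf.iInf_preimageSum_le_iSup hφ n))
    fun ε hε => ?_
  obtain ⟨k, C, hkC⟩ := hf.exists_preimageSum_le_exp_mul hφ hε
  exact ⟨k, C, fun n => hf.log_iSup_preimageSum_le_of_forall_le hφ (hkC n)⟩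

theorem pressure_le_pressure_add (hf : IsMixingRepeller f r) (hφ : Continuous φ)
    (hψ : Continuous ψ) {c : ℝ} (h : ∀ x, φ x ≤ ψ x + c) : pressure f φ ≤ pressure f ψ + c := by
  refine le_of_tendsto_of_tendsto (hf.tendsto_log_iSup_preimageSum hφ)
    ((hf.tendsto_log_iSup_preimageSum hψ).add_const c) ?_
  filter_upwards [eventually_gt_atTop 0] with n hn
  have : (0 : ℝ) < n := Nat.cast_pos.2 hn
  have hle : ⨆ y, preimageSum f φ n y ≤ Real.exp (n * c) * ⨆ y, preimageSum f ψ n y :=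
    ciSup_le fun y => (preimageSum_le_exp_mul_of_le_add hf.finite_preimage h n y).trans <| by
      gcongr
      exact le_ciSup (hf.bddAbove_range_preimageSum hψ n) y
  have hlog := Real.log_le_log (hf.iSup_preimageSum_pos hφ n) hle
  rw [Real.log_mul (Real.exp_pos _).ne' (hf.iSup_preimageSum_pos hψ n).ne', Real.log_exp] at hlog
  calc (n : ℝ)⁻¹ * Real.log (⨆ y, preimageSum f φ n y)
      ≤ (n : ℝ)⁻¹ * (n * c + Real.log (⨆ y, preimageSum f ψ n y)) := by gcongr
    _ = (n : ℝ)⁻¹ * Real.log (⨆ y, preimageSum f ψ n y) + c := by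
        field_simp
        ring

theorem pressure_nonneg (hf : IsMixingRepeller f r) (hφ : Continuous φ) (h : ∀ x, 0 ≤ φ x) :
    0 ≤ pressure f φ := by
  refine ge_of_tendsto' (hf.tendsto_log_iInf_preimageSum hφ) fun n => ?_
  have hone : 1 ≤ ⨅ y, preimageSum f φ n y := le_ciInf fun y => by
    simpa using exp_natCast_mul_le_preimageSum hf.finite_preimage hf.surjective h n y
  exact mul_nonneg (by positivity) (Real.log_nonneg hone)

theorem antitone_mul_add_pressure (hf : IsMixingRepeller f r) (hφ : Continuous φ) {a : ℝ}
    (ha : ∀ x, a ≤ φ x) : Antitone fun s : ℝ => s * a + pressure f fun x => -s * φ x := by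
  intro s t hst
  have h := hf.pressure_le_pressure_add (φ := fun x => -t * φ x) (ψ := fun x => -s * φ x)
    (c := (s - t) * a) (by fun_prop) (by fun_prop)
    fun x => by nlinarith [mul_le_mul_of_nonneg_left (ha x) (sub_nonneg.2 hst)]
  dsimp only
  linarith

theorem monotone_mul_add_pressure (hf : IsMixingRepeller f r) (hφ : Continuous φ) {b : ℝ}
    (hb : ∀ x, φ x ≤ b) : Monotone fun s : ℝ => s * b + pressure f fun x => -s * φ x := by
  intro s t hst
  have h := hf.pressure_le_pressure_add (φ := fun x => -s * φ x) (ψ := fun x => -t * φ x)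
    (c := (t - s) * b) (by fun_prop) (by fun_prop)
    fun x => by nlinarith [mul_le_mul_of_nonneg_left (hb x) (sub_nonneg.2 hst)]
  dsimp only
  linarith

end IsMixingRepeller

end MixingRepeller

section ConformalDerivative

variable {X : Type*} [MetricSpace X] {f : X → X} {Df : X → ℝ}

/- The difference quotient extends continuously from the off-diagonal of `X × X` to the diagonal,
and `Df` is the restriction of this extension. -/
theorem IsConfDeriv.continuous (hDf : IsConfDeriv f Df) (hX : ∀ x : X, (𝓝[≠] x).NeBot) :
    Continuous Df := by
  set A : Set (X × X) := {p | p.1 ≠ p.2}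
  set q : X × X → ℝ := fun p => dist (f p.1) (f p.2) / dist p.1 p.2
  have hq (x : X) : Tendsto q (𝓝[A] (x, x)) (𝓝 (Df x)) := by
    rw [nhdsWithin, nhds_prod_eq]
    exact hDf x
  have hA (x : X) : (x, x) ∈ closure A := by
    have hx := hX x
    have hlim : Tendsto (fun u => (u, x)) (𝓝[≠] x) (𝓝 (x, x)) :=
      (Continuous.tendsto (by fun_prop) x).mono_left nhdsWithin_le_nhds
    exact mem_closure_of_tendsto hlim self_mem_nhdsWithin
  have hext : ContinuousOn (extendFrom A q) (range fun x => (x, x)) :=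
    continuousOn_extendFrom (range_subset_iff.2 hA) (forall_mem_range.2 fun x => ⟨Df x, hq x⟩)
  have hDf_eq : Df = fun x => extendFrom A q (x, x) :=
    funext fun x => (extendFrom_eq (hA x) (hq x)).symm
  rw [hDf_eq]
  exact hext.comp_continuous (by fun_prop) mem_range_self

theorem orbDeriv_rpow_eq_exp_birkhoffSum (hDf : ∀ x, 0 < Df x) (s : ℝ) (n : ℕ) (x : X) :
    orbDeriv f Df n x ^ (-s) = Real.exp (birkhoffSum f (fun x => -s * Real.log (Df x)) n x) := by
  rw [orbDeriv, ← Real.finsetProd_rpow _ _ fun k _ => (hDf _).le, birkhoffSum, Real.exp_sum]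
  exact Finset.prod_congr rfl fun k _ => by rw [Real.rpow_def_of_pos (hDf _), mul_comm]

theorem Mn_eq_iSup_preimageSum (hDf : ∀ x, 0 < Df x) (s : ℝ) (n : ℕ) :
    Mn f Df s n = ⨆ y, preimageSum f (fun x => -s * Real.log (Df x)) n y := by
  simp only [Mn, preimageSum, orbDeriv_rpow_eq_exp_birkhoffSum hDf]

theorem mn_eq_iInf_preimageSum (hDf : ∀ x, 0 < Df x) (s : ℝ) (n : ℕ) :
    mn f Df s n = ⨅ y, preimageSum f (fun x => -s * Real.log (Df x)) n y := by
  simp only [mn, preimageSum, orbDeriv_rpow_eq_exp_birkhoffSum hDf]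

end ConformalDerivative

theorem dist_le_dist_of_le_div {X Y : Type*} [MetricSpace X] [PseudoMetricSpace Y] {f : X → Y}
    {c : ℝ} (hc : 1 ≤ c) {u v : X} (h : u ≠ v → c ≤ dist (f u) (f v) / dist u v) :
    dist u v ≤ dist (f u) (f v) := by
  rcases eq_or_ne u v with rfl | huv
  · simp
  · exact (one_le_div (dist_pos.2 huv)).1 (hc.trans (h huv))

theorem operator_bounds_general {X : Type*} [MetricSpace X] [CompactSpace X] [Nonempty X]
    {f : X → X} {r : ℝ} (hf : IsMixingRepeller f r) {w : X → ℝ} (hw : Continuous w) {β : ℝ}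
    (hβ : 1 < β) (hwβ : ∀ x, β ≤ w x) :
    ∃ P : ℝ → ℝ,
      (∀ s, Tendsto (fun n : ℕ => (n : ℝ)⁻¹ * Real.log (mn f w s n)) atTop (𝓝 (P s)) ∧
        Tendsto (fun n : ℕ => (n : ℝ)⁻¹ * Real.log (Mn f w s n)) atTop (𝓝 (P s))) ∧
      (Antitone fun s => s * Real.log β + P s) ∧
      (Monotone fun s => s * Real.log (⨆ x, w x) + P s) ∧
      0 ≤ P 0 ∧ Continuous P ∧ StrictAnti P ∧ ∃! s, 0 ≤ s ∧ P s = 0 := by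
  have hlogβ : 0 < Real.log β := Real.log_pos hβ
  have hpos (x : X) : 0 < w x := by linarith [hwβ x]
  have hφ : Continuous fun x => Real.log (w x) := hw.log fun x => (hpos x).ne'
  have hanti := hf.antitone_mul_add_pressure hφ fun x =>
    Real.log_le_log (by linarith) (hwβ x)
  have hmono := hf.monotone_mul_add_pressure hφ fun x =>
    Real.log_le_log (hpos x) (le_ciSup (isCompact_range hw).bddAbove x)
  have hcont := continuous_of_antitone_of_monotone_mul_add hanti hmono
  have hP0 := hf.pressure_nonneg (φ := fun x => -0 * Real.log (w x)) (by fun_prop) (by simp)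
  refine ⟨fun s => pressure f fun x => -s * Real.log (w x), fun s => ?_, hanti, hmono, hP0, hcont,
    strictAnti_of_antitone_mul_add hlogβ hanti,
    existsUnique_nonneg_zero_of_antitone_mul_add hlogβ hanti hcont hP0⟩
  simp only [mn_eq_iInf_preimageSum hpos, Mn_eq_iSup_preimageSum hpos]
  exact ⟨hf.tendsto_log_iInf_preimageSum (by fun_prop),
    hf.tendsto_log_iSup_preimageSum (by fun_prop)⟩

/-- **Operator bounds Lemma.** For a strongly mixing `C¹` conformal repeller, the lower and
upper pressures agree, are finite (the limit exists in `ℝ`), and the resulting pressure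
function is continuous, strictly decreasing and has a unique zero `s_crit ≥ 0`. -/
theorem operator_bounds {Λ : Type*} [MetricSpace Λ] [CompactSpace Λ] [Nonempty Λ]
    (hpt : ∀ x : Λ, (𝓝[≠] x).NeBot)
    (f : Λ → Λ) (Df : Λ → ℝ)
    (hcont : Continuous f) (hsurj : Function.Surjective f)
    (hconf : IsConfDeriv f Df)
    (hexp : UnifExpanding f Df)
    (hopen : IsOpenMap f)
    (hfib : ∀ y : Λ, (f ⁻¹' {y}).Finite)
    (hmix : ∀ δ : ℝ, 0 < δ → ∃ n₀ : ℕ, ∀ x : Λ, f^[n₀] '' ball x δ = Set.univ)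
    (β lam₀ lam₁ δf : ℝ)
    (hβ : 1 < β) (hDfβ : ∀ x : Λ, β ≤ Df x)
    (hlam₀ : 1 < lam₀) (hlam₀β : lam₀ < β) (hδf : 0 < δf)
    (hC2' : ∀ u v : Λ, u ≠ v → dist u v < δf →
      lam₀ ≤ dist (f u) (f v) / dist u v ∧ dist (f u) (f v) / dist u v ≤ lam₁)
    (hC3' : ∀ x : Λ, ball (f x) δf ⊆ f '' ball x δf) :
    ∃ P : ℝ → ℝ,
      (∀ s : ℝ, 0 ≤ s →
        Filter.Tendsto (fun n : ℕ => (n : ℝ)⁻¹ * Real.log (mn f Df s n))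
          Filter.atTop (𝓝 (P s)) ∧
        Filter.Tendsto (fun n : ℕ => (n : ℝ)⁻¹ * Real.log (Mn f Df s n))
          Filter.atTop (𝓝 (P s))) ∧
      (∀ s t : ℝ, 0 ≤ s → s ≤ t →
        t * Real.log β + P t ≤ s * Real.log β + P s) ∧
      (∀ s t : ℝ, 0 ≤ s → s ≤ t →
        s * Real.log (⨆ x : Λ, Df x) + P s ≤ t * Real.log (⨆ x : Λ, Df x) + P t) ∧
      0 ≤ P 0 ∧
      ContinuousOn P (Set.Ici 0) ∧
      StrictAntiOn P (Set.Ici 0) ∧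
      (∃! s : ℝ, 0 ≤ s ∧ P s = 0) := by
  have hf : IsMixingRepeller f δf :=
    { scale_pos := hδf
      dist_le_dist_map := fun u v huv =>
        dist_le_dist_of_le_div hlam₀.le fun hne => (hC2' u v hne huv).1
      ball_subset_image := hC3'
      exists_iterate_image_ball := hmix }
  obtain ⟨P, hlim, hanti, hmono, h0, hcontP, hstrict, hzero⟩ :=
    operator_bounds_general hf (hconf.continuous hpt) hβ hDfβ
  exact ⟨P, fun s _ => hlim s, fun _ _ _ hst => hanti hst, fun _ _ _ hst => hmono hst, h0,
    hcontP.continuousOn, hstrict.strictAntiOn _, hzero⟩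

end
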